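/- If x ∈ S_n' has rank at most m+2n−2 (equivalently, if there exists a subspace U ⊆ ℂ^{m+2n} of dimension m+2n−2 with im x ⊆ U), then ker x = span{u_1, u_{m+n+1}}, and in particular x u_1 = x u_{m+n+1} = 0. (Kernel claim from the proof of Lemma 4.14 of the paper: every point of X_{n,m+2n−1} has the same kernel ⟨e_1, f_1⟩.) -/

import Mathlib

/-!
Outside rows `m+n` and `m+2n`, an element `x` of `S_n'` acts like `z_n`, so the corresponding
coordinates of `x v` are the coordinates of `v` other than the first and the `(m+n+1)`-st
(`apply_eq_of_mem_slice'`). Hence `ker x ⊆ span{u_1, u_{m+n+1}}` for every `x ∈ S_n'`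
(`ker_le_of_mem_slice'`). If the rank of `x` is at most `m+2n-2`, rank–nullity gives
`dim ker x ≥ 2`, and the inclusion is an equality by dimension.
-/

open Module BigOperators

noncomputable section

/-- The `k`-th standard basis vector `u_k` of `ℂ^(m+2n)`, indexed `1`-based;
it is zero if `k` is out of the range `1, …, m+2n`. -/
def stdVec (m n : ℕ) (k : ℕ) : Fin (m + 2*n) → ℂ := fun i => if (i : ℕ) + 1 = k then 1 else 0

/-- The matrix of the two-block nilpotent `z_n` of Jordan type `(m+n, n)`:
`z_n u_i = u_{i-1}` for `2 ≤ i ≤ m+n` and for `m+n+2 ≤ i ≤ m+2n`, and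
`z_n u_1 = z_n u_{m+n+1} = 0`. -/
def zMat (m n : ℕ) : Matrix (Fin (m + 2*n)) (Fin (m + 2*n)) ℂ :=
  fun i j => if (j : ℕ) = (i : ℕ) + 1 ∧ (j : ℕ) ≠ m + n then 1 else 0

/-- The two-block nilpotent `z_n` as an endomorphism of `ℂ^(m+2n)`. -/
def zn (m n : ℕ) : Module.End ℂ (Fin (m + 2*n) → ℂ) := Matrix.toLin' (zMat m n)

/-- The enlarged slice `S_n' ⊆ End(ℂ^(m+2n))`: the endomorphisms whose matrix agrees
with that of `z_n` outside rows `m+n` and `m+2n`, i.e. `x u_j - z_n u_j` lies in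
`span{u_{m+n}, u_{m+2n}}` for every `j`. -/
def slice' (m n : ℕ) : Set (Module.End ℂ (Fin (m + 2*n) → ℂ)) :=
  { x | ∀ j : ℕ, x (stdVec m n j) - zn m n (stdVec m n j) ∈
      Submodule.span ℂ {stdVec m n (m + n), stdVec m n (m + 2*n)} }


lemma stdVec_succ (m n : ℕ) (j : Fin (m + 2*n)) :
    stdVec m n (j + 1) = Pi.single j 1 := by
  ext i
  simp [stdVec, Pi.single_apply, Fin.ext_iff]

/-- For `j` (0-based) different from `0` and `m+n`, the coordinate `j - 1` of `x v` is the
coordinate `j` of `v`. -/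
lemma apply_eq_of_mem_slice' (m n : ℕ) (x : Module.End ℂ (Fin (m + 2*n) → ℂ))
    (hx : x ∈ slice' m n) (v : Fin (m + 2*n) → ℂ) (i j : Fin (m + 2*n))
    (hij : (j : ℕ) = i + 1) (hj : (j : ℕ) ≠ m + n) : x v i = v j := by
  have hz : zn m n v i = v j := by
    have h : ∀ k : Fin (m + 2*n), zMat m n i k * v k = if k = j then v k else 0 := by
      intro k
      by_cases hk : k = j
      · subst hk
        simp [zMat, hij, hij ▸ hj]
      · have : ¬ ((k : ℕ) = (i : ℕ) + 1) := fun h => hk (Fin.ext (h.trans hij.symm))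
        simp [zMat, hk, this]
    simp [zn, Matrix.toLin'_apply, Matrix.mulVec, dotProduct, h]
  have hspan : Submodule.span ℂ {stdVec m n (m + n), stdVec m n (m + 2*n)} ≤
      LinearMap.ker (LinearMap.proj (R := ℂ) (φ := fun _ : Fin (m + 2*n) => ℂ) i) := by
    rw [Submodule.span_le]
    have h1 : (i : ℕ) + 1 ≠ m + n := by omega
    have h2 : (i : ℕ) + 1 ≠ m + 2*n := by have := j.isLt; omega
    rintro w (rfl | rfl)
    · simp [stdVec, h1]
    · simp [stdVec, h2]
  have hzero : (LinearMap.proj (R := ℂ) (φ := fun _ : Fin (m + 2*n) => ℂ) i) ∘ₗ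
      (x - zn m n) = 0 := by
    refine (Pi.basisFun ℂ (Fin (m + 2*n))).ext fun k => ?_
    have := hspan (hx (k + 1))
    rw [stdVec_succ] at this
    simpa using this
  have h := LinearMap.congr_fun hzero v
  simp only [LinearMap.comp_apply, LinearMap.sub_apply, LinearMap.proj_apply, Pi.sub_apply,
    LinearMap.zero_apply] at h
  rw [← hz]
  exact sub_eq_zero.mp h

lemma ker_le_of_mem_slice' (m n : ℕ) (hn : 1 ≤ n) (x : Module.End ℂ (Fin (m + 2*n) → ℂ))
    (hx : x ∈ slice' m n) :
    LinearMap.ker x ≤ Submodule.span ℂ {stdVec m n 1, stdVec m n (m + n + 1)} := by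
  intro v hv
  rw [LinearMap.mem_ker] at hv
  rw [Submodule.mem_span_pair]
  refine ⟨v ⟨0, by omega⟩, v ⟨m + n, by omega⟩, ?_⟩
  ext j
  by_cases h0 : (j : ℕ) = 0
  · have hj : (⟨0, by omega⟩ : Fin (m + 2*n)) = j := Fin.ext h0.symm
    rw [hj]
    simp [stdVec, h0]
    omega
  by_cases h1 : (j : ℕ) = m + n
  · have hj : (⟨m + n, by omega⟩ : Fin (m + 2*n)) = j := Fin.ext h1.symm
    rw [hj]
    simp only [stdVec, Pi.add_apply, Pi.smul_apply, smul_eq_mul, Nat.add_eq_right, h1,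
      if_true, mul_one]
    rw [if_neg (by omega), mul_zero, zero_add]
  · have := apply_eq_of_mem_slice' m n x hx v ⟨j - 1, by omega⟩ j (by simp; omega) h1
    simp [hv] at this
    simp [stdVec, h0, h1, ← this]

/-- If `x ∈ S_n'` has rank at most `m+2n−2`, then
`ker x = span{u_1, u_{m+n+1}}`; in particular `x u_1 = x u_{m+n+1} = 0`. -/
theorem slice'_small_rank_ker (m n : ℕ) (hn : 1 ≤ n)
    (x : Module.End ℂ (Fin (m + 2*n) → ℂ)) (hx : x ∈ slice' m n)
    (hrank : Module.finrank ℂ (LinearMap.range x) ≤ m + 2*n - 2) :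
    LinearMap.ker x = Submodule.span ℂ {stdVec m n 1, stdVec m n (m + n + 1)} ∧
    x (stdVec m n 1) = 0 ∧ x (stdVec m n (m + n + 1)) = 0 := by
  have hle := ker_le_of_mem_slice' m n hn x hx
  have hker : LinearMap.ker x =
      Submodule.span ℂ {stdVec m n 1, stdVec m n (m + n + 1)} := by
    refine Submodule.eq_of_le_of_finrank_le hle ?_
    have h1 := LinearMap.finrank_range_add_finrank_ker x
    rw [Module.finrank_fin_fun] at h1
    have h2 : Module.finrank ℂ
        (Submodule.span ℂ {stdVec m n 1, stdVec m n (m + n + 1)}) ≤ 2 := by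
      classical
      have h := finrank_span_finset_le_card (R := ℂ)
        ({stdVec m n 1, stdVec m n (m + n + 1)} : Finset (Fin (m + 2*n) → ℂ))
      rw [Finset.coe_pair] at h
      exact h.trans Finset.card_le_two
    omega
  refine ⟨hker, ?_, ?_⟩ <;> rw [← LinearMap.mem_ker, hker] <;>
    exact Submodule.subset_span (by simp)
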